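/- arXiv:1404.6155 — 2 statements merged into one kernel-verified Lean document; each statement's English description precedes it below -/
import Mathlib

section
/- Let T : G₁ → G₂ be a surjective group homomorphism between commutative lattice-ordered groups that is a lattice homomorphism (T(x ⊔ y) = T(x) ⊔ T(y) for all x, y). Then the following are equivalent: (i) for every sequence (xₙ) in G₁ with xₙ ↓ 0 (i.e., (xₙ) is decreasing and its infimum is 0), one has T(xₙ) ↓ 0 in G₂; (ii) the kernel Ker(T) is σ-order closed, i.e., whenever (xₙ) is a sequence in Ker(T), x ∈ G₁, and 0 ≤ xₙ ↑ x (the sequence is increasing with supremum x), then x ∈ Ker(T). -/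
/-- a surjective lattice homomorphism is σ-order-continuous (maps sequences
decreasing to zero to sequences decreasing to zero) iff its kernel is σ-order closed. -/
theorem stmt11 {G₁ G₂ : Type*}
    [AddCommGroup G₁] [Lattice G₁] [CovariantClass G₁ G₁ (· + ·) (· ≤ ·)]
    [AddCommGroup G₂] [Lattice G₂] [CovariantClass G₂ G₂ (· + ·) (· ≤ ·)]
    (T : G₁ →+ G₂) (hsurj : Function.Surjective T)
    (hlat : ∀ x y : G₁, T (x ⊔ y) = T x ⊔ T y) :
    (∀ x : ℕ → G₁, Antitone x → IsGLB (Set.range x) 0 →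
        Antitone (fun n => T (x n)) ∧ IsGLB (Set.range fun n => T (x n)) 0) ↔
      (∀ (x : ℕ → G₁) (z : G₁), (∀ n, T (x n) = 0) → Monotone x → (∀ n, 0 ≤ x n) →
        IsLUB (Set.range x) z → T z = 0) := by
  haveI : IsOrderedAddMonoid G₁ :=
    { add_le_add_left := fun a b h c => by
        rw [add_comm a c, add_comm b c]; exact CovariantClass.elim c h }
  haveI : IsOrderedAddMonoid G₂ :=
    { add_le_add_left := fun a b h c => by
        rw [add_comm a c, add_comm b c]; exact CovariantClass.elim c h }
  have hmono : ∀ a b : G₁, a ≤ b → T a ≤ T b := by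
    intro a b h
    have h1 := hlat a b
    rw [sup_eq_right.mpr h] at h1
    rw [h1]
    exact le_sup_left
  constructor
  · intro h x z hx hm _ hz
    have h1 := (h (fun n => z - x n) (fun a b hab => sub_le_sub_left (hm hab) z) ?_).2
    · have h2 : (fun n => T (z - x n)) = fun _ : ℕ => T z := by
        funext n
        rw [map_sub, hx, sub_zero]
      rw [h2, Set.range_const] at h1
      exact isGLB_singleton.unique h1
    · constructor
      · rintro _ ⟨n, rfl⟩
        exact sub_nonneg.mpr (hz.1 ⟨n, rfl⟩)
      · intro b hb
        have h3 : z ≤ z - b := by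
          apply hz.2
          rintro _ ⟨n, rfl⟩
          exact le_sub_comm.mp (hb ⟨n, rfl⟩)
        have h4 := le_sub_comm.mp h3
        rwa [sub_self] at h4
  · intro h x hx hg
    refine ⟨fun a b hab => hmono _ _ (hx hab), ?_, ?_⟩
    · rintro _ ⟨n, rfl⟩
      have := hmono _ _ (hg.1 ⟨n, rfl⟩)
      rwa [map_zero] at this
    · intro w hw
      obtain ⟨y, rfl⟩ := hsurj w
      have hT : T (y ⊔ 0) = 0 := by
        apply h (fun n => (y ⊔ 0 - x n) ⊔ 0)
        · intro n
          have h0 := hmono _ _ (hg.1 ⟨n, rfl⟩)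
          rw [map_zero] at h0
          rw [hlat, map_sub, hlat, map_zero]
          exact sup_eq_right.mpr (sub_nonpos.mpr (sup_le (hw ⟨n, rfl⟩) h0))
        · intro a b hab
          exact sup_le_sup_right (sub_le_sub_left (hx hab) _) _
        · intro n
          exact le_sup_right
        · constructor
          · rintro _ ⟨n, rfl⟩
            exact sup_le (sub_le_self _ (hg.1 ⟨n, rfl⟩)) le_sup_right
          · intro b hb
            apply sub_nonpos.mp
            apply hg.2
            rintro _ ⟨n, rfl⟩
            exact sub_le_comm.mp (le_sup_left.trans (hb ⟨n, rfl⟩))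
      rw [← hT]
      exact hmono _ _ le_sup_left
end

section
/- Let A be an ideal of a commutative lattice-ordered group G, let G/A denote the quotient group, π : G → G/A the natural projection, and order G/A by: π(x) ≤ π(y) if and only if there exist a, b ∈ G with a − x ∈ A, b − y ∈ A and a ≤ b. Then: (1) if π(x) has a representative a with a ≥ 0 and also a representative −b with b ≥ 0, then x ∈ A (the induced positive cone is pointed); (2) for every x ∈ G, π(x⁺) is the least upper bound of {π(0), π(x)} with respect to this relation, i.e., π(0) ≤ π(x⁺), π(x) ≤ π(x⁺), and for every y ∈ G with π(0) ≤ π(y) and π(x) ≤ π(y) one has π(x⁺) ≤ π(y). -/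
/-- A subset of a lattice-ordered group is solid if `|x| ≤ |y|` and `y ∈ S` imply `x ∈ S`,
where `|x| = x ⊔ (-x)`. -/
def IsSolid {G : Type*} [AddCommGroup G] [Lattice G] (S : Set G) : Prop :=
  ∀ ⦃x y : G⦄, x ⊔ -x ≤ y ⊔ -y → y ∈ S → x ∈ S

/-- The order relation induced on the quotient of a lattice-ordered group `G` by a
subgroup `A`, expressed on representatives: `π u ≤ π v` iff there are representatives
`a` of `π u` and `b` of `π v` with `a ≤ b`. -/
def QLe {G : Type*} [AddCommGroup G] [Lattice G] (A : AddSubgroup G) (u v : G) : Prop :=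
  ∃ a b : G, a - u ∈ A ∧ b - v ∈ A ∧ a ≤ b

/-- for an ideal `A` of a commutative lattice-ordered group `G`, the induced
positive cone on `G/A` is pointed, and `π(x⁺)` is the least upper bound of `{π 0, π x}`
with respect to the induced order. -/
theorem stmt12 {G : Type*} [AddCommGroup G] [Lattice G]
    [CovariantClass G G (· + ·) (· ≤ ·)]
    (A : AddSubgroup G) (hA : IsSolid (A : Set G)) :
    (∀ x a b : G, 0 ≤ a → a - x ∈ A → 0 ≤ b → (-b) - x ∈ A → x ∈ A) ∧
    (∀ x : G, QLe A 0 (x ⊔ 0) ∧ QLe A x (x ⊔ 0) ∧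
      ∀ y : G, QLe A 0 y → QLe A x y → QLe A (x ⊔ 0) y) := by
  have hmono : ∀ u v w : G, u ≤ v → w + u ≤ w + v := fun u v w h =>
    CovariantClass.elim (μ := fun a b : G => a + b) (r := fun a b : G => a ≤ b) w h
  haveI : IsOrderedAddMonoid G :=
    { add_le_add_left := fun a b h c => by
        rw [add_comm a c, add_comm b c]; exact hmono a b c h }
  have habs : ∀ c ∈ A, |c| ∈ A := by
    intro c hc
    refine hA (x := |c|) (y := c) ?_ hc
    change |(|c|)| ≤ |c|
    rw [abs_abs]
  have key : ∀ u v : G, QLe A u v → ∃ c ∈ A, u ≤ v + c := by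
    rintro u v ⟨a, b, ha, hb, hab⟩
    refine ⟨(b - v) - (a - u), A.sub_mem hb ha, ?_⟩
    have e : v + ((b - v) - (a - u)) = u + (b - a) := by abel
    rw [e]
    exact le_add_of_nonneg_right (sub_nonneg.2 hab)
  refine ⟨?_, ?_⟩
  · intro x a b ha hax hb hbx
    have hab : a + b ∈ A := by
      have h := A.sub_mem hax hbx
      have e : a - x - (-b - x) = a + b := by abel
      rwa [e] at h
    have haA : a ∈ A := by
      refine hA (x := a) (y := a + b) ?_ hab
      change |a| ≤ |a + b|
      rw [abs_of_nonneg ha, abs_of_nonneg (add_nonneg ha hb)]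
      exact le_add_of_nonneg_right hb
    have h := A.sub_mem haA hax
    rwa [sub_sub_cancel] at h
  · intro x
    refine ⟨⟨0, x ⊔ 0, by simp, by simp, le_sup_right⟩,
      ⟨x, x ⊔ 0, by simp, by simp, le_sup_left⟩, ?_⟩
    intro y h0 hx
    obtain ⟨c, hc, h1⟩ := key _ _ h0
    obtain ⟨d, hd, h2⟩ := key _ _ hx
    refine ⟨x ⊔ 0, y + (|c| + |d|), by simp, ?_, ?_⟩
    · rw [add_sub_cancel_left]
      exact A.add_mem (habs c hc) (habs d hd)
    · refine sup_le (h2.trans (hmono _ _ _ ?_)) (h1.trans (hmono _ _ _ ?_))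
      · exact (le_abs_self d).trans (le_add_of_nonneg_left (abs_nonneg c))
      · exact (le_abs_self c).trans (le_add_of_nonneg_right (abs_nonneg d))
end
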